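/- Let N be prime and E an elliptic curve over F_p with a point P of exact order N, where p + 1 + 2√p < 2N. Then #E(F_p) = N, and consequently p must be prime if N·P = 0 certifies group order N within the Hasse bound (Pocklington-style primality certificate via elliptic curves). -/

import Mathlib

open WeierstrassCurve

namespace Manin

section FieldLevel

variable {K : Type*} [Field K]

/-- The short Weierstrass curve `y² = x³ + A x + B`. -/
def shortW (A B : K) : Affine K := ⟨0, 0, 0, A, B⟩

lemma shortW_equation (A B x y : K) :
    (shortW A B).Equation x y ↔ y ^ 2 = x ^ 3 + A * x + B := by
  rw [Affine.equation_iff]; simp [shortW]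

lemma shortW_nonsingular {A B x y : K} (h2 : (2 : K) ≠ 0) (hy : y ≠ 0)
    (h : y ^ 2 = x ^ 3 + A * x + B) : (shortW A B).Nonsingular x y := by
  rw [Affine.nonsingular_iff]
  refine ⟨(shortW_equation A B x y).2 h, Or.inr ?_⟩
  simp only [shortW]
  intro h'
  have : 2 * y = 0 := by linear_combination h'
  exact (mul_ne_zero h2 hy) this

lemma add_sub_formula [DecidableEq K] (A B x0 y0 : K) (h2 : (2 : K) ≠ 0) (hy0 : y0 ≠ 0)
    (hQ : (shortW A B).Nonsingular x0 y0) (P : (shortW A B).Point) :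
    ∃ μ : K, μ ≠ 0 ∧
      (P.xRep 0 - x0 * P.xRep 1) ^ 2 =
        μ * ((P + .some x0 y0 hQ).xRep 1 * (P - .some x0 y0 hQ).xRep 1) ∧
      2 * ((P.xRep 0 + x0 * P.xRep 1) * (A * P.xRep 1 + x0 * P.xRep 0) + 2 * B * P.xRep 1 ^ 2) =
        μ * ((P + .some x0 y0 hQ).xRep 0 * (P - .some x0 y0 hQ).xRep 1
          + (P - .some x0 y0 hQ).xRep 0 * (P + .some x0 y0 hQ).xRep 1) ∧
      (x0 * P.xRep 0 - A * P.xRep 1) ^ 2 - 4 * B * P.xRep 1 * (P.xRep 0 + x0 * P.xRep 1) =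
        μ * ((P + .some x0 y0 hQ).xRep 0 * (P - .some x0 y0 hQ).xRep 0) := by
  have hq := (shortW_equation A B x0 y0).1 hQ.1
  have hyn : y0 ≠ (shortW A B).negY x0 y0 := by
    simp only [Affine.negY, shortW]
    intro h
    have : 2 * y0 = 0 := by linear_combination h
    exact (mul_ne_zero h2 hy0) this
  have hdbl : (Affine.Point.some x0 y0 hQ + .some x0 y0 hQ).xRep 1 = 1 ∧
      4 * y0 ^ 2 * (Affine.Point.some x0 y0 hQ + .some x0 y0 hQ).xRep 0
        = (x0 ^ 2 - A) ^ 2 - 8 * B * x0 := by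
    rw [Affine.Point.add_self_of_Y_ne hyn, Affine.Point.xRep_some]
    refine ⟨rfl, ?_⟩
    have h2y : y0 - (shortW A B).negY x0 y0 = 2 * y0 := by
      simp [Affine.negY, shortW]; ring
    rw [Affine.slope_of_Y_ne rfl hyn, h2y]
    simp [Affine.addX, shortW]
    field_simp
    linear_combination (-32 * x0) * hq
  rcases P with _ | ⟨x, y, hP⟩
  · rw [← Affine.Point.zero_def]
    refine ⟨1, one_ne_zero, ?_⟩
    rw [zero_add, zero_sub, Affine.Point.xRep_neg]
    simp
    constructor <;> ring
  · have hp := (shortW_equation A B x y).1 hP.1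
    by_cases hx : x = x0
    · have hμ : (4 * y0 ^ 2 : K) ≠ 0 := by
        have : (4 : K) = 2 * 2 := by norm_num
        rw [this]; positivity
      have key : Affine.Point.some x y hP = .some x0 y0 hQ ∨
        Affine.Point.some x y hP = - .some x0 y0 hQ := Affine.Point.X_eq_iff.1 hx
      refine ⟨4 * y0 ^ 2, hμ, ?_⟩
      rcases key with key | key
      · rw [key, sub_self]
        obtain ⟨h1, h0⟩ := hdbl
        rw [h1]
        simp only [Affine.Point.xRep_some, Affine.Point.xRep_zero]
        simp
        constructor
        · linear_combination (-4) * hq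
        · linear_combination - h0
      · rw [key, neg_add_cancel, ← neg_add', Affine.Point.xRep_neg, Affine.Point.xRep_neg]
        obtain ⟨h1, h0⟩ := hdbl
        rw [h1]
        simp only [Affine.Point.xRep_some, Affine.Point.xRep_zero]
        simp
        constructor
        · linear_combination (-4) * hq
        · linear_combination - h0
    · have hx' : x - x0 ≠ 0 := sub_ne_zero.2 hx
      refine ⟨(x - x0) ^ 2, pow_ne_zero _ hx', ?_⟩
      rw [sub_eq_add_neg (Affine.Point.some x y hP), Affine.Point.neg_some, Affine.Point.add_of_X_ne hx,
        Affine.Point.add_of_X_ne hx]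
      simp only [Affine.Point.xRep_some, Affine.slope_of_X_ne hx]
      simp [Affine.addX, Affine.negY, shortW]
      constructor
      · field_simp
        linear_combination (-2) * hp - 2 * hq
      · field_simp
        linear_combination (-(y ^ 2 - y0 ^ 2 + (x ^ 3 + A * x + B) - (x0 ^ 3 + A * x0 + B))
            + 2 * (x + x0) * (x - x0) ^ 2) * hp
          + ((y ^ 2 - y0 ^ 2 + (x ^ 3 + A * x + B) - (x0 ^ 3 + A * x0 + B))
            + 2 * (x + x0) * (x - x0) ^ 2) * hq

end FieldLevel

section PolyLevel

open Polynomial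

lemma exists_bezout {R : Type*} [CommRing R] (a b c : R)
    (h : ∀ M : Ideal R, M.IsMaximal → a ∈ M → b ∈ M → c ∈ M → False) :
    ∃ r s t : R, r * a + s * b + t * c = 1 := by
  have htop : Ideal.span {a, b, c} = (⊤ : Ideal R) := by
    by_contra hne
    obtain ⟨M, hM, hle⟩ := Ideal.exists_le_maximal _ hne
    refine h M hM ?_ ?_ ?_ <;> apply hle <;> apply Ideal.subset_span <;> simp
  have h1 : (1 : R) ∈ Ideal.span {a, b, c} := by rw [htop]; trivial
  obtain ⟨r, s, t, hrst⟩ := Submodule.mem_span_triple.1 h1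
  exact ⟨r, s, t, by simpa using hrst⟩

lemma proportional {R : Type*} [CommRing R] (u0 u1 u2 v0 v1 v2 : R)
    (hu : ∃ r s t : R, r * u0 + s * u1 + t * u2 = 1)
    (hv : ∃ r s t : R, r * v0 + s * v1 + t * v2 = 1)
    (h01 : u0 * v1 = u1 * v0) (h02 : u0 * v2 = u2 * v0) (h12 : u1 * v2 = u2 * v1) :
    ∃ c : R, IsUnit c ∧ v0 = c * u0 ∧ v1 = c * u1 ∧ v2 = c * u2 := by
  obtain ⟨r, s, t, h⟩ := hu
  obtain ⟨r', s', t', h'⟩ := hv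
  have e0 : v0 = (r * v0 + s * v1 + t * v2) * u0 := by
    linear_combination (-v0) * h - s * h01 - t * h02
  have e1 : v1 = (r * v0 + s * v1 + t * v2) * u1 := by
    linear_combination (-v1) * h + r * h01 - t * h12
  have e2 : v2 = (r * v0 + s * v1 + t * v2) * u2 := by
    linear_combination (-v2) * h + r * h02 + s * h12
  refine ⟨r * v0 + s * v1 + t * v2, ?_, e0, e1, e2⟩
  refine IsUnit.of_mul_eq_one (r' * u0 + s' * u1 + t' * u2) ?_
  linear_combination h' - r' * e0 - s' * e1 - t' * e2

lemma IsCoprime.not_both_mem {R : Type*} [CommRing R] {x z : R} (h : IsCoprime x z)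
    {M : Ideal R} (hM : M.IsMaximal) (hx : x ∈ M) (hz : z ∈ M) : False := by
  obtain ⟨r, s, hrs⟩ := h
  apply hM.ne_top
  rw [Ideal.eq_top_iff_one, ← hrs]
  exact M.add_mem (M.mul_mem_left _ hx) (M.mul_mem_left _ hz)

lemma sym_primitive {R : Type*} [CommRing R] {x z x' z' : R} (h : IsCoprime x z)
    (h' : IsCoprime x' z') :
    ∃ r s t : R, r * (z * z') + s * (x * z' + x' * z) + t * (x * x') = 1 := by
  apply exists_bezout
  intro M hM h0 h1 h2
  have hp := hM.isPrime
  rcases hp.mem_or_mem h0 with hz | hz'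
  · have hx : x ∉ M := fun hx => IsCoprime.not_both_mem h hM hx hz
    have : x * z' ∈ M := by
      have := M.sub_mem h1 (M.mul_mem_left x' hz)
      simpa using this
    have hz' := (hp.mem_or_mem this).resolve_left hx
    have hx' := (hp.mem_or_mem h2).resolve_left hx
    exact IsCoprime.not_both_mem h' hM hx' hz'
  · have hx' : x' ∉ M := fun hx => IsCoprime.not_both_mem h' hM hx hz'
    have : x' * z ∈ M := by
      have := M.sub_mem h1 (M.mul_mem_left x hz')
      simpa using this
    have hz := (hp.mem_or_mem this).resolve_left hx'
    have hx := (hp.mem_or_mem h2).resolve_right hx'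
    exact IsCoprime.not_both_mem h hM hx hz

lemma T_primitive {R : Type*} [CommRing R] (a b t x z : R) (h2 : IsUnit (2 : R))
    (hd : IsUnit (4 * a ^ 3 + 27 * b ^ 2)) (h : IsCoprime x z) :
    ∃ r s q : R, r * (x - t * z) ^ 2 + s * (2 * ((x + t * z) * (a * z + t * x) + 2 * b * z ^ 2))
      + q * ((t * x - a * z) ^ 2 - 4 * b * z * (x + t * z)) = 1 := by
  apply exists_bezout
  intro M hM h0 h1 h2'
  have hp := hM.isPrime
  have hxz : x - t * z ∈ M := hp.mem_of_pow_mem _ h0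
  have hz : z ∉ M := by
    intro hz
    refine IsCoprime.not_both_mem h hM ?_ hz
    have := M.add_mem hxz (M.mul_mem_left t hz)
    simpa using this
  have hu2 : (2 : R) ∉ M := fun h => hM.ne_top (Ideal.eq_top_of_isUnit_mem _ h h2)
  have e1 : 2 * 2 * z ^ 2 * (t ^ 3 + a * t + b) ∈ M := by
    have := M.sub_mem h1 (M.mul_mem_left (2 * (a * z + t * x + 2 * t * t * z)) hxz)
    convert this using 1
    ring
  have e2 : z ^ 2 * ((t ^ 2 - a) ^ 2 - 8 * b * t) ∈ M := by
    have := M.sub_mem h2' (M.mul_mem_left (t * (t * x - a * z + t * t * z - a * z) - 4 * b * z) hxz)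
    convert this using 1
    ring
  have hz2 : z ^ 2 ∉ M := fun h => hz (hp.mem_of_pow_mem _ h)
  have h22 : 2 * 2 * z ^ 2 ∉ M := by
    intro h
    rcases hp.mem_or_mem h with h | h
    · rcases hp.mem_or_mem h with h | h <;> exact hu2 h
    · exact hz2 h
  have f1 := (hp.mem_or_mem e1).resolve_left h22
  have f2 := (hp.mem_or_mem e2).resolve_left hz2
  apply hM.ne_top
  refine Ideal.eq_top_of_isUnit_mem _ ?_ hd
  have := M.sub_mem (M.mul_mem_left (3 * t ^ 2 + 4 * a) f2)
    (M.mul_mem_left (3 * t ^ 3 - 5 * a * t - 27 * b) f1)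
  convert this using 1
  ring

variable {F : Type*} [Field F]

lemma degree_step (a b : F) (x z xr zr xs zs c : F[X]) (hc : IsUnit c) (hxz : z.degree < x.degree)
    (h0 : (x - X * z) ^ 2 = c * (zr * zs))
    (h1 : 2 * ((x + X * z) * (C a * z + X * x) + 2 * C b * z ^ 2) = c * (xr * zs + xs * zr))
    (h2 : (X * x - C a * z) ^ 2 - 4 * C b * z * (x + X * z) = c * (xr * xs)) :
    zr.degree < xr.degree ∧ zs.degree < xs.degree ∧
      xr.natDegree + xs.natDegree = 2 * x.natDegree + 2 := by
  have hx0 : x ≠ 0 := by rintro rfl; simp at hxz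
  have hdc : c.degree = 0 := degree_eq_zero_of_isUnit hc
  set d := x.natDegree with hd
  have hdx : x.degree = d := degree_eq_natDegree hx0
  have hXz : (X * z).degree ≤ (d : WithBot ℕ) := by
    by_cases hz : z = 0
    · simp [hz]
    · rw [degree_mul, degree_X, degree_eq_natDegree hz]
      rw [hdx, degree_eq_natDegree hz] at hxz
      norm_cast at hxz ⊢; omega
  have hzd : z.degree ≤ (d : WithBot ℕ) := by rw [← hdx]; exact hxz.le
  have hXx : (X * x).degree = ((d + 1 : ℕ) : WithBot ℕ) := by
    rw [degree_mul, degree_X, hdx]; norm_cast; omega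
  have hCz : ∀ e : F, (C e * z).degree < x.degree := fun e =>
    lt_of_le_of_lt (by rw [degree_mul]; exact le_trans (add_le_add_left degree_C_le _) (by simp)) hxz
  have hCz' : ∀ e : F, (C e * z).degree ≤ (d : WithBot ℕ) := fun e => hdx ▸ (hCz e).le
  have hxp : (x + X * z).degree ≤ (d : WithBot ℕ) := (degree_add_le _ _).trans (max_le hdx.le hXz)
  have hxm : (x - X * z).degree ≤ (d : WithBot ℕ) := (degree_sub_le _ _).trans (max_le hdx.le hXz)
  have hlt : (d : WithBot ℕ) < ((d + 1 : ℕ) : WithBot ℕ) := by norm_cast; omega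
  have k0 : (zr * zs).degree ≤ ((2 * d : ℕ) : WithBot ℕ) := by
    have : (c * (zr * zs)).degree ≤ ((2 * d : ℕ) : WithBot ℕ) := by
      rw [← h0, pow_two, degree_mul]
      refine (add_le_add hxm hxm).trans ?_
      norm_cast; omega
    rwa [degree_mul, hdc, zero_add] at this
  have k1 : (xr * zs + xs * zr).degree ≤ ((2 * d + 1 : ℕ) : WithBot ℕ) := by
    have : (c * (xr * zs + xs * zr)).degree ≤ ((2 * d + 1 : ℕ) : WithBot ℕ) := by
      rw [← h1]
      have e2 : (2 : F[X]) = C 2 := (map_ofNat C 2).symm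
      have hA : ((x + X * z) * (C a * z + X * x)).degree ≤ ((2 * d + 1 : ℕ) : WithBot ℕ) := by
        rw [degree_mul]
        have : (C a * z + X * x).degree ≤ ((d + 1 : ℕ) : WithBot ℕ) :=
          (degree_add_le _ _).trans (max_le ((hCz' a).trans hlt.le) hXx.le)
        refine (add_le_add hxp this).trans ?_
        norm_cast; omega
      have hB : (2 * C b * z ^ 2).degree ≤ ((2 * d + 1 : ℕ) : WithBot ℕ) := by
        have : 2 * C b * z ^ 2 = (C (2 * b) * z) * z := by rw [C_mul, e2]; ring
        rw [this, degree_mul]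
        refine (add_le_add (hCz' _) hzd).trans ?_
        norm_cast; omega
      rw [e2, degree_mul]
      refine (add_le_add degree_C_le (e2 ▸ (degree_add_le _ _).trans (max_le hA hB))).trans ?_
      simp
    rwa [degree_mul, hdc, zero_add] at this
  have k2 : (xr * xs).degree = ((2 * d + 2 : ℕ) : WithBot ℕ) := by
    have : (c * (xr * xs)).degree = ((2 * d + 2 : ℕ) : WithBot ℕ) := by
      rw [← h2]
      have hA : (X * x - C a * z).degree = ((d + 1 : ℕ) : WithBot ℕ) := by
        rw [degree_sub_eq_left_of_degree_lt, hXx]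
        rw [hXx]; exact lt_of_le_of_lt (hCz' a) hlt
      have hA2 : ((X * x - C a * z) ^ 2).degree = ((2 * d + 2 : ℕ) : WithBot ℕ) := by
        rw [pow_two, degree_mul, hA]; norm_cast; omega
      have hB : (4 * C b * z * (x + X * z)).degree < ((2 * d + 2 : ℕ) : WithBot ℕ) := by
        have : 4 * C b * z = C (4 * b) * z := by rw [C_mul, show (C 4 : F[X]) = 4 from map_ofNat C 4]
        rw [this, degree_mul]
        refine lt_of_le_of_lt (add_le_add (hCz' _) hxp) ?_
        norm_cast; omega
      rw [degree_sub_eq_left_of_degree_lt, hA2]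
      rw [hA2]; exact hB
    rwa [degree_mul, hdc, zero_add] at this
  have hne : xr * xs ≠ 0 := by
    intro h; rw [h, degree_zero] at k2; exact WithBot.bot_ne_coe k2
  have hxr : xr ≠ 0 := left_ne_zero_of_mul hne
  have hxs : xs ≠ 0 := right_ne_zero_of_mul hne
  have hsum : xr.natDegree + xs.natDegree = 2 * d + 2 := by
    rw [degree_eq_natDegree hne, natDegree_mul hxr hxs] at k2
    exact_mod_cast k2
  have aux : ∀ xr zr xs zs : F[X], xr ≠ 0 → xs ≠ 0 → xr.natDegree + xs.natDegree = 2 * d + 2 →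
      (zr * zs).degree ≤ ((2 * d : ℕ) : WithBot ℕ) →
      (xr * zs + xs * zr).degree ≤ ((2 * d + 1 : ℕ) : WithBot ℕ) → zr.degree < xr.degree := by
    intro xr zr xs zs hxr hxs hsum k0 k1
    by_contra hcon
    push Not at hcon
    have hzr : zr ≠ 0 := by
      rintro rfl
      rw [degree_zero, le_bot_iff, degree_eq_bot] at hcon
      exact hxr hcon
    have hcon' : xr.natDegree ≤ zr.natDegree := natDegree_le_natDegree hcon
    have l1 : (xs * zr).degree = ((xs.natDegree + zr.natDegree : ℕ) : WithBot ℕ) := by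
      rw [degree_mul, degree_eq_natDegree hxs, degree_eq_natDegree hzr]; norm_cast
    have l2 : (xr * zs).degree < (xs * zr).degree := by
      by_cases hzs : zs = 0
      · rw [hzs, mul_zero, l1, degree_zero]; exact WithBot.bot_lt_coe _
      · rw [l1, degree_mul, degree_eq_natDegree hxr, degree_eq_natDegree hzs]
        rw [degree_mul, degree_eq_natDegree hzr, degree_eq_natDegree hzs] at k0
        norm_cast at k0 ⊢; omega
    rw [degree_add_eq_right_of_degree_lt l2, l1] at k1
    norm_cast at k1; omega
  refine ⟨aux xr zr xs zs hxr hxs hsum k0 k1, aux xs zs xr zr hxs hxr (by omega) ?_ ?_, hsum⟩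
  · rwa [mul_comm]
  · rwa [add_comm]

end PolyLevel

section Sequence

open Polynomial

variable {F : Type*} [Field F]

/-- The cubic `X³ + a X + b`. -/
noncomputable def cubic (a b : F) : F[X] := X ^ 3 + C a * X + C b

lemma cubic_natDegree (a b : F) : (cubic a b).natDegree = 3 := by
  unfold cubic; compute_degree!

lemma cubic_ne_zero (a b : F) : cubic a b ≠ 0 := by
  intro h
  have := cubic_natDegree a b
  rw [h] at this; simp at this

/-- The quadratic twist of `y² = x³ + a x + b` over the rational function field by the cubic. -/
noncomputable def twist (a b : F) : Affine (RatFunc F) :=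
  shortW (algebraMap F[X] (RatFunc F) (C a * cubic a b ^ 2))
    (algebraMap F[X] (RatFunc F) (C b * cubic a b ^ 3))

/-- The pair `(x, z)` of coprime polynomials represents the (twisted) `x`-coordinate of `P`. -/
def HasRep (a b : F) (P : (twist a b).Point) (x z : F[X]) : Prop :=
  IsCoprime x z ∧ ∃ l : RatFunc F, l ≠ 0 ∧
    algebraMap F[X] (RatFunc F) (cubic a b) * algebraMap F[X] (RatFunc F) x = l * P.xRep 0 ∧
    algebraMap F[X] (RatFunc F) z = l * P.xRep 1

lemma algMap_ne_zero {x : F[X]} (h : x ≠ 0) : algebraMap F[X] (RatFunc F) x ≠ 0 :=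
  RatFunc.algebraMap_ne_zero h

lemma exists_rep (a b : F) (P : (twist a b).Point) : ∃ x z, HasRep a b P x z := by
  have hf := algMap_ne_zero (cubic_ne_zero a b)
  rcases P with _ | ⟨x, y, h⟩
  · refine ⟨1, 0, isCoprime_one_left, _, hf, ?_⟩
    rw [← Affine.Point.zero_def, Affine.Point.xRep_zero]
    simp
  · set w := x / algebraMap F[X] (RatFunc F) (cubic a b) with hw
    have hd := algMap_ne_zero w.denom_ne_zero
    refine ⟨w.num, w.denom, w.isCoprime_num_denom, _, hd, ?_⟩
    rw [Affine.Point.xRep_some]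
    have := w.num_div_denom
    rw [div_eq_iff hd] at this
    rw [this, hw]
    simp
    field_simp

lemma rep_unique {a b : F} {P : (twist a b).Point} {x z x' z' : F[X]} (h : HasRep a b P x z)
    (h' : HasRep a b P x' z') : x.degree = x'.degree ∧ z.degree = z'.degree := by
  have hf := algMap_ne_zero (cubic_ne_zero a b)
  obtain ⟨hc, l, hl, h0, h1⟩ := h
  obtain ⟨hc', l', hl', h0', h1'⟩ := h'
  have key : x * z' = x' * z := by
    apply RatFunc.algebraMap_injective F
    rw [map_mul, map_mul]
    apply mul_left_cancel₀ hf
    rw [← mul_assoc, h0, h1', ← mul_assoc (algebraMap F[X] (RatFunc F) (cubic a b)), h0', h1]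
    ring
  have d1 : x ∣ x' := hc.dvd_of_dvd_mul_right ⟨z', key.symm⟩
  have d2 : x' ∣ x := hc'.dvd_of_dvd_mul_right ⟨z, key⟩
  have d3 : z ∣ z' := hc.symm.dvd_of_dvd_mul_left ⟨x', by rw [key, mul_comm]⟩
  have d4 : z' ∣ z := hc'.symm.dvd_of_dvd_mul_left ⟨x, by rw [← key, mul_comm]⟩
  exact ⟨degree_eq_degree_of_associated (associated_of_dvd_dvd d1 d2),
    degree_eq_degree_of_associated (associated_of_dvd_dvd d3 d4)⟩

lemma scale_aux {K : Type*} [Field K] {a b f t x z l e0 e1 xr zr lr r0 r1 xs zs ls s0 s1 μ A B x0 : K}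
    (hA : A = a * f ^ 2) (hB : B = b * f ^ 3) (hx0 : x0 = f * t)
    (hf : f ≠ 0) (hl : l ≠ 0) (hlr : lr ≠ 0) (hls : ls ≠ 0)
    (p0 : f * x = l * e0) (p1 : z = l * e1) (hr0 : f * xr = lr * r0) (hr1 : zr = lr * r1)
    (hs0 : f * xs = ls * s0) (hs1 : zs = ls * s1)
    (m0 : (e0 - x0 * e1) ^ 2 = μ * (r1 * s1))
    (m1 : 2 * ((e0 + x0 * e1) * (A * e1 + x0 * e0) + 2 * B * e1 ^ 2)
      = μ * (r0 * s1 + s0 * r1))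
    (m2 : (x0 * e0 - A * e1) ^ 2 - 4 * B * e1 * (e0 + x0 * e1)
      = μ * (r0 * s0)) :
    (lr * ls * f ^ 2) * (x - t * z) ^ 2 = l ^ 2 * μ * (zr * zs) ∧
    (lr * ls * f ^ 2) * (2 * ((x + t * z) * (a * z + t * x) + 2 * b * z ^ 2))
      = l ^ 2 * μ * (xr * zs + xs * zr) ∧
    (lr * ls * f ^ 2) * ((t * x - a * z) ^ 2 - 4 * b * z * (x + t * z))
      = l ^ 2 * μ * (xr * xs) := by
  have q0 : x = l * e0 / f := by rw [← p0]; field_simp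
  have q1 : xr = lr * r0 / f := by rw [← hr0]; field_simp
  have q2 : xs = ls * s0 / f := by rw [← hs0]; field_simp
  subst q0 q1 q2 p1 hr1 hs1 hA hB hx0
  refine ⟨?_, ?_, ?_⟩
  · field_simp
    linear_combination m0
  · field_simp
    linear_combination m1
  · field_simp
    linear_combination m2

variable [DecidableEq (RatFunc F)]

lemma parallelogram {a b : F} (h2 : (2 : F) ≠ 0) (hd : 4 * a ^ 3 + 27 * b ^ 2 ≠ 0)
    (hQ : (twist a b).Nonsingular (algebraMap F[X] (RatFunc F) (cubic a b * X))
      (algebraMap F[X] (RatFunc F) (cubic a b ^ 2)))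
    {P : (twist a b).Point} {x z xr zr xs zs : F[X]}
    (hP : HasRep a b P x z) (hR : HasRep a b (P + .some _ _ hQ) xr zr)
    (hS : HasRep a b (P - .some _ _ hQ) xs zs) (hxz : z.degree < x.degree) :
    zr.degree < xr.degree ∧ zs.degree < xs.degree ∧
      xr.natDegree + xs.natDegree = 2 * x.natDegree + 2 := by
  have hf := algMap_ne_zero (cubic_ne_zero a b)
  have h2K : (2 : RatFunc F) ≠ 0 := by
    have := algMap_ne_zero (F := F) (x := C 2) (by simpa using h2)
    rwa [show (C 2 : F[X]) = 2 from map_ofNat C 2, map_ofNat] at this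
  obtain ⟨μ, hμ, m0, m1, m2⟩ := add_sub_formula _ _ _ _ h2K
    (algMap_ne_zero (pow_ne_zero 2 (cubic_ne_zero a b))) hQ P
  obtain ⟨hc, l, hl, p0, p1⟩ := hP
  obtain ⟨hcr, lr, hlr, r0, r1⟩ := hR
  obtain ⟨hcs, ls, hls, s0, s1⟩ := hS
  have hu := sym_primitive hcr hcs
  have hv := T_primitive (C a) (C b) X x z
    (by rw [← map_ofNat C 2]; exact isUnit_C.2 h2.isUnit)
    (by
      have : (4 * C a ^ 3 + 27 * C b ^ 2 : F[X]) = C (4 * a ^ 3 + 27 * b ^ 2) := by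
        simp only [C_add, C_mul, C_pow, map_ofNat]
      rw [this]; exact isUnit_C.2 hd.isUnit) hc
  have hsc := scale_aux (a := algebraMap F[X] (RatFunc F) (C a))
    (b := algebraMap F[X] (RatFunc F) (C b)) (t := algebraMap F[X] (RatFunc F) X) (μ := μ)
    (by rw [map_mul, map_pow]) (by rw [map_mul, map_pow]) (by rw [map_mul])
    hf hl hlr hls p0 p1 r0 r1 s0 s1 m0 m1 m2
  obtain ⟨g0, g1, g2⟩ := hsc
  have hα : lr * ls * algebraMap F[X] (RatFunc F) (cubic a b) ^ 2 ≠ 0 := by positivity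
  have inj := RatFunc.algebraMap_injective F
  obtain ⟨c, hcu, c0, c1, c2⟩ := proportional _ _ _ _ _ _ hu hv
    (by
      apply inj
      simp only [map_mul, map_add, map_sub, map_pow, map_ofNat]
      apply mul_left_cancel₀ hα
      linear_combination (algebraMap F[X] (RatFunc F) zr * algebraMap F[X] (RatFunc F) zs) * g1
        - (algebraMap F[X] (RatFunc F) xr * algebraMap F[X] (RatFunc F) zs +
          algebraMap F[X] (RatFunc F) xs * algebraMap F[X] (RatFunc F) zr) * g0)
    (by
      apply inj
      simp only [map_mul, map_add, map_sub, map_pow, map_ofNat]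
      apply mul_left_cancel₀ hα
      linear_combination (algebraMap F[X] (RatFunc F) zr * algebraMap F[X] (RatFunc F) zs) * g2
        - (algebraMap F[X] (RatFunc F) xr * algebraMap F[X] (RatFunc F) xs) * g0)
    (by
      apply inj
      simp only [map_mul, map_add, map_sub, map_pow, map_ofNat]
      apply mul_left_cancel₀ hα
      linear_combination (algebraMap F[X] (RatFunc F) xr * algebraMap F[X] (RatFunc F) zs +
          algebraMap F[X] (RatFunc F) xs * algebraMap F[X] (RatFunc F) zr) * g2
        - (algebraMap F[X] (RatFunc F) xr * algebraMap F[X] (RatFunc F) xs) * g1)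
  exact degree_step a b x z xr zr xs zs c hcu hxz c0 c1 c2

lemma sequence {a b : F} (h2 : (2 : F) ≠ 0) (hd : 4 * a ^ 3 + 27 * b ^ 2 ≠ 0)
    (hQ : (twist a b).Nonsingular (algebraMap F[X] (RatFunc F) (cubic a b * X))
      (algebraMap F[X] (RatFunc F) (cubic a b ^ 2)))
    {P : (twist a b).Point} {x z xs zs : F[X]}
    (hP : HasRep a b P x z) (hxz : z.degree < x.degree)
    (hS : HasRep a b (P - .some _ _ hQ) xs zs) (n : ℤ) :
    0 ≤ n ^ 2 + ((x.natDegree : ℤ) + 1 - xs.natDegree) * n + x.natDegree := by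
  choose rx rz hr using exists_rep a b
  set Q : (twist a b).Point := .some _ _ hQ with hQdef
  set D : ℤ → ℕ := fun n => (rx (P + n • Q)).natDegree with hD
  have step : ∀ n : ℤ, (rz (P + n • Q)).degree < (rx (P + n • Q)).degree →
      (rz (P + (n + 1) • Q)).degree < (rx (P + (n + 1) • Q)).degree ∧
      (rz (P + (n - 1) • Q)).degree < (rx (P + (n - 1) • Q)).degree ∧
      D (n + 1) + D (n - 1) = 2 * D n + 2 := by
    intro n hn
    have e1 : P + (n + 1) • Q = P + n • Q + Q := by rw [add_zsmul, one_zsmul, add_assoc]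
    have e2 : P + (n - 1) • Q = P + n • Q - Q := by rw [sub_zsmul, one_zsmul]; abel
    simp only [hD]
    rw [e1, e2]
    exact parallelogram h2 hd hQ (hr _) (hr _) (hr _) hn
  have base : HasRep a b (P + (0 : ℤ) • Q) x z := by simpa using hP
  have d0 : D 0 = x.natDegree := natDegree_eq_of_degree_eq (rep_unique (hr _) base).1
  have dm : D (-1) = xs.natDegree := by
    refine natDegree_eq_of_degree_eq (rep_unique (hr _) (x' := xs) (z' := zs) ?_).1
    have : P + (-1 : ℤ) • Q = P - Q := by simp [sub_eq_add_neg]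
    rw [this]; exact hS
  have lt0 : (rz (P + (0 : ℤ) • Q)).degree < (rx (P + (0 : ℤ) • Q)).degree := by
    rw [(rep_unique (hr _) base).1, (rep_unique (hr _) base).2]; exact hxz
  have ltall : ∀ n : ℤ, (rz (P + n • Q)).degree < (rx (P + n • Q)).degree := by
    intro n
    induction n using Int.induction_on with
    | zero => exact lt0
    | succ i ih => exact (step _ ih).1
    | pred i ih => exact (step _ ih).2.1
  have hrec : ∀ n : ℤ, (D (n + 1) : ℤ) + D (n - 1) = 2 * D n + 2 := fun n => by
    exact_mod_cast (step n (ltall n)).2.2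
  have formula : ∀ n : ℤ, (D n : ℤ) = n ^ 2 + ((D 0 : ℤ) + 1 - D (-1)) * n + D 0 ∧
      (D (n - 1) : ℤ) = (n - 1) ^ 2 + ((D 0 : ℤ) + 1 - D (-1)) * (n - 1) + D 0 := by
    intro n
    induction n using Int.induction_on with
    | zero =>
      constructor
      · simp
      · rw [zero_sub]; ring
    | succ i ih =>
      refine ⟨?_, ?_⟩
      · have := hrec i
        linear_combination this + 2 * ih.1 - ih.2
      · simpa using ih.1
    | pred i ih =>
      refine ⟨ih.2, ?_⟩
      have := hrec (-i - 1)
      rw [sub_add_cancel] at this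
      linear_combination this + 2 * ih.2 - ih.1
  have := (formula n).1
  rw [d0, dm] at this
  rw [← this]
  positivity

end Sequence

section Count

open Polynomial

variable {p : ℕ} [Fact p.Prime]

lemma cubic_eval (a b c : ZMod p) : (cubic a b).eval c = c ^ 3 + a * c + b := by
  simp [cubic]

/-- Numerator of the `x`-coordinate of `P₀ - Q`, up to the factor `f`. -/
noncomputable def numer (a b : ZMod p) (m : ℕ) : (ZMod p)[X] :=
  cubic a b * (cubic a b ^ m + 1) ^ 2 - (X ^ p + X) * (X ^ p - X) ^ 2

lemma cubic_pow (a b : ZMod p) : cubic a b ^ p = X ^ (3 * p) + C a * X ^ p + C b := by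
  rw [← ZMod.expand_card]
  simp only [cubic, map_add, map_mul, map_pow, expand_X, expand_C]
  ring

lemma numer_natDegree (a b : ZMod p) (m : ℕ) (hm : p = 2 * m + 1) (hm1 : 1 ≤ m) :
    (numer a b m).natDegree = 2 * p + 1 := by
  have e : numer a b m = X ^ (2 * p + 1) + (C a * X ^ p + C b + 2 * cubic a b ^ (m + 1) + cubic a b
      + X ^ (p + 2) - X ^ 3) := by
    have h := cubic_pow a b
    have h' : cubic a b * (cubic a b ^ m) ^ 2 = cubic a b ^ p := by
      have : cubic a b ^ p = cubic a b ^ (2 * m + 1) := congrArg _ hm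
      rw [this]; ring
    have h3 : (X ^ (3 * p) : (ZMod p)[X]) = (X ^ p) ^ 3 := by ring
    have h4 : (X ^ (2 * p + 1) : (ZMod p)[X]) = (X ^ p) ^ 2 * X := by ring
    rw [h3] at h
    rw [numer, h4]
    linear_combination h' + h
  have hf := cubic_natDegree a b
  have hfp : (cubic a b ^ (m + 1)).natDegree = (m + 1) * 3 := by rw [natDegree_pow, hf]
  rw [e, natDegree_add_eq_left_of_natDegree_lt, natDegree_X_pow]
  rw [natDegree_X_pow]
  have l1 : (C a * X ^ p : (ZMod p)[X]).natDegree ≤ 2 * p :=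
    (natDegree_C_mul_X_pow_le a p).trans (by omega)
  have l2 : (C b : (ZMod p)[X]).natDegree ≤ 2 * p := by simp
  have l3 : (2 * cubic a b ^ (m + 1)).natDegree ≤ 2 * p := by
    rw [show (2 : (ZMod p)[X]) = C 2 from (map_ofNat C 2).symm]
    refine (natDegree_C_mul_le _ _).trans ?_
    omega
  have l4 : (cubic a b).natDegree ≤ 2 * p := by omega
  have l5 : (X ^ (p + 2) : (ZMod p)[X]).natDegree ≤ 2 * p := by rw [natDegree_X_pow]; omega
  have l6 : (X ^ 3 : (ZMod p)[X]).natDegree ≤ 2 * p := by rw [natDegree_X_pow]; omega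
  refine Nat.lt_succ_of_le ?_
  exact (natDegree_sub_le_of_le (natDegree_add_le_of_degree_le (natDegree_add_le_of_degree_le
    (natDegree_add_le_of_degree_le (natDegree_add_le_of_degree_le l1 l2) l3) l4) l5) l6).trans
    (max_self _).le

lemma mult_bound (a b : ZMod p) (m : ℕ) (hm : p = 2 * m + 1) (hm1 : 1 ≤ m)
    (hd : 4 * a ^ 3 + 27 * b ^ 2 ≠ 0) (G : (ZMod p)[X]) (hN : G ∣ numer a b m)
    (hD : G ∣ (X ^ p - X) ^ 2) (c : ZMod p) :
    G.roots.count c + (Finset.univ.filter fun y : ZMod p => y ^ 2 = c ^ 3 + a * c + b).card ≤ 2 := by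
  have hp1 : 1 < p := (Fact.out : p.Prime).one_lt
  have hp2 : (2 : ZMod p) ≠ 0 := by
    intro h
    have : ((2 : ℕ) : ZMod p) = 0 := by exact_mod_cast h
    rw [ZMod.natCast_eq_zero_iff] at this
    have := Nat.le_of_dvd (by norm_num) this
    omega
  have hX0 : (X ^ p - X : (ZMod p)[X]) ≠ 0 := FiniteField.X_pow_card_sub_X_ne_zero _ hp1
  have hD0 : (X ^ p - X : (ZMod p)[X]) ^ 2 ≠ 0 := pow_ne_zero _ hX0
  have hG0 : G ≠ 0 := ne_zero_of_dvd_ne_zero hD0 hD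
  have hroots : (X ^ p - X : (ZMod p)[X]).roots = Finset.univ.val := by
    have := FiniteField.roots_X_pow_card_sub_X (ZMod p)
    rwa [ZMod.card] at this
  have hle2 : G.roots.count c ≤ 2 := by
    refine (Multiset.count_le_of_le c (roots.le_of_dvd hD0 hD)).trans ?_
    rw [roots_pow, hroots, Multiset.count_nsmul]
    simp
  have hcp : c ^ p = c := ZMod.pow_card c
  by_cases hf0 : c ^ 3 + a * c + b = 0
  · have h1 : (Finset.univ.filter fun y : ZMod p => y ^ 2 = c ^ 3 + a * c + b).card ≤ 1 := by
      rw [Finset.card_le_one]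
      intro x hx y hy
      simp [hf0] at hx hy
      rw [hx, hy]
    have h2 : G.roots.count c ≤ 1 := by
      rw [count_roots, rootMultiplicity_le_iff hG0]
      intro hdvd
      have hXc : (X - C c) ∣ (X ^ p - X : (ZMod p)[X]) := by
        rw [dvd_iff_isRoot]; simp [hcp]
      have k1 : (X - C c) ^ 2 ∣ cubic a b * (cubic a b ^ m + 1) ^ 2 := by
        have := dvd_add (hdvd.trans hN) (Dvd.dvd.mul_left (pow_dvd_pow_of_dvd hXc 2) (X ^ p + X))
        rwa [numer, sub_add_cancel] at this
      have cop : IsCoprime (X - C c) (cubic a b ^ m + 1) := by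
        rw [(irreducible_X_sub_C c).coprime_iff_not_dvd, dvd_iff_isRoot]
        simp only [IsRoot, eval_add, eval_pow, cubic_eval, hf0, eval_one]
        rw [zero_pow (by omega)]; simp
      have k2 : (X - C c) ^ 2 ∣ cubic a b := (cop.pow (m := 2) (n := 2)).dvd_of_dvd_mul_right k1
      obtain ⟨g, hg⟩ := k2
      have hder := congrArg (fun q => (derivative q).eval c) hg
      simp [cubic, pow_two] at hder
      apply hd
      have ha : a = - 3 * c ^ 2 := by linear_combination hder
      have hb : b = 2 * c ^ 3 := by linear_combination hf0 - c * ha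
      rw [ha, hb]; ring
    omega
  · by_cases hsq : ∃ y : ZMod p, y ^ 2 = c ^ 3 + a * c + b
    · obtain ⟨y, hy⟩ := hsq
      have hy0 : y ≠ 0 := by rintro rfl; apply hf0; rw [← hy]; simp
      have h1 : (Finset.univ.filter fun y : ZMod p => y ^ 2 = c ^ 3 + a * c + b).card ≤ 2 := by
        refine (Finset.card_le_card (t := {y, -y}) ?_).trans Finset.card_le_two
        intro w hw
        simp only [Finset.mem_filter, Finset.mem_univ, true_and] at hw
        rw [← hy, sq_eq_sq_iff_eq_or_eq_neg] at hw
        simpa using hw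
      have h2 : G.roots.count c = 0 := by
        rw [Multiset.count_eq_zero]
        intro hmem
        have hr : (numer a b m).IsRoot c := (isRoot_of_mem_roots hmem).dvd hN
        have hfm : (c ^ 3 + a * c + b) ^ m = 1 := by
          rw [← hy, ← pow_mul]
          have := ZMod.pow_card_sub_one_eq_one hy0
          rwa [show p - 1 = 2 * m by omega] at this
        simp only [IsRoot, numer, eval_sub, eval_mul, eval_pow, eval_add, cubic_eval, eval_one, eval_X,
          hcp, hfm] at hr
        have : (c ^ 3 + a * c + b) * (2 * 2) = 0 := by linear_combination hr
        simp [hf0, hp2] at this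
      omega
    · have : (Finset.univ.filter fun y : ZMod p => y ^ 2 = c ^ 3 + a * c + b) = ∅ := by
        rw [Finset.filter_eq_empty_iff]
        intro y _ hy
        exact hsq ⟨y, hy⟩
      rw [this]; simpa using hle2

lemma gcd_bound (a b : ZMod p) (m : ℕ) (hm : p = 2 * m + 1) (hm1 : 1 ≤ m)
    (hd : 4 * a ^ 3 + 27 * b ^ 2 ≠ 0) (G : (ZMod p)[X]) (hN : G ∣ numer a b m)
    (hD : G ∣ (X ^ p - X) ^ 2) :
    G.natDegree + ∑ c : ZMod p,
      (Finset.univ.filter fun y : ZMod p => y ^ 2 = c ^ 3 + a * c + b).card ≤ 2 * p := by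
  have hp1 : 1 < p := (Fact.out : p.Prime).one_lt
  have hX0 : (X ^ p - X : (ZMod p)[X]) ≠ 0 := FiniteField.X_pow_card_sub_X_ne_zero _ hp1
  have hD0 : (X ^ p - X : (ZMod p)[X]) ^ 2 ≠ 0 := pow_ne_zero _ hX0
  have hroots : (X ^ p - X : (ZMod p)[X]).roots = Finset.univ.val := by
    have := FiniteField.roots_X_pow_card_sub_X (ZMod p)
    rwa [ZMod.card] at this
  have hs : (X ^ p - X : (ZMod p)[X]).Splits := by
    rw [splits_iff_card_roots, hroots, FiniteField.X_pow_card_sub_X_natDegree_eq _ hp1]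
    simp [ZMod.card]
  have hsG : G.Splits := (hs.pow 2).of_dvd hD0 hD
  have hdeg : G.natDegree = ∑ c : ZMod p, G.roots.count c := by
    rw [← splits_iff_card_roots.1 hsG, Multiset.sum_count_eq_card]
    simp
  rw [hdeg, ← Finset.sum_add_distrib]
  refine (Finset.sum_le_card_nsmul _ _ 2 fun c _ => mult_bound a b m hm hm1 hd G hN hD c).trans ?_
  simp [ZMod.card, mul_comm]

end Count

section Hasse

open Polynomial

variable {p : ℕ} [Fact p.Prime]

lemma quad_bound (q d : ℤ) (hodd : q % 2 = 1)
    (h : ∀ n : ℤ, 0 ≤ n ^ 2 + (q + 1 - d) * n + q) (hs : 0 ≤ d - q - 1) :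
    (d - q - 1) ^ 2 ≤ 4 * q := by
  obtain ⟨k, hk | hk⟩ := Int.even_or_odd' (d - q - 1)
  · have := h k
    rw [show q + 1 - d = - (2 * k) by omega] at this
    rw [hk]; nlinarith
  · have := h k
    rw [show q + 1 - d = - (2 * k + 1) by omega] at this
    have hne : q ≠ k * (k + 1) := by
      intro he
      have := Int.even_mul_succ_self k
      rw [← he, Int.even_iff] at this
      omega
    have h1 : k * (k + 1) < q := lt_of_le_of_ne (by nlinarith) (Ne.symm hne)
    rw [hk]; nlinarith

lemma exists_height (a b : ZMod p) (m : ℕ) (hm : p = 2 * m + 1) (hm1 : 1 ≤ m)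
    (hd : 4 * a ^ 3 + 27 * b ^ 2 ≠ 0) :
    ∃ d : ℕ, 1 + ∑ c : ZMod p,
        (Finset.univ.filter fun y : ZMod p => y ^ 2 = c ^ 3 + a * c + b).card ≤ d ∧
      ∀ n : ℤ, 0 ≤ n ^ 2 + ((p : ℤ) + 1 - d) * n + p := by
  classical
  have hp1 : 1 < p := (Fact.out : p.Prime).one_lt
  have hp2 : (2 : ZMod p) ≠ 0 := by
    intro h
    have : ((2 : ℕ) : ZMod p) = 0 := by exact_mod_cast h
    rw [ZMod.natCast_eq_zero_iff] at this
    have := Nat.le_of_dvd (by norm_num) this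
    omega
  have h2K : (2 : RatFunc (ZMod p)) ≠ 0 := by
    have := algMap_ne_zero (F := ZMod p) (x := C 2) (by simpa using hp2)
    rwa [show (C 2 : (ZMod p)[X]) = 2 from map_ofNat C 2, map_ofNat] at this
  have hf0 := cubic_ne_zero a b
  have hfd : cubic a b = X ^ 3 + C a * X + C b := rfl
  have hfp : cubic a b * (cubic a b ^ m) ^ 2 = (X ^ p) ^ 3 + C a * X ^ p + C b := by
    have h3 : (X ^ p : (ZMod p)[X]) ^ 3 = X ^ (3 * p) := by ring
    rw [h3, ← cubic_pow]
    have : cubic a b ^ p = cubic a b ^ (2 * m + 1) := congrArg _ hm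
    rw [this]; ring
  have hQ : (twist a b).Nonsingular (algebraMap (ZMod p)[X] (RatFunc (ZMod p)) (cubic a b * X))
      (algebraMap (ZMod p)[X] (RatFunc (ZMod p)) (cubic a b ^ 2)) := by
    apply shortW_nonsingular h2K (algMap_ne_zero (pow_ne_zero _ hf0))
    simp only [← map_pow, ← map_mul, ← map_add]
    congr 1
    linear_combination (cubic a b ^ 3) * hfd
  have hfm0 : cubic a b ^ 2 * cubic a b ^ m ≠ 0 := mul_ne_zero (pow_ne_zero _ hf0) (pow_ne_zero _ hf0)
  have hP : (twist a b).Nonsingular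
      (algebraMap (ZMod p)[X] (RatFunc (ZMod p)) (cubic a b * X ^ p))
      (algebraMap (ZMod p)[X] (RatFunc (ZMod p)) (cubic a b ^ 2 * cubic a b ^ m)) := by
    apply shortW_nonsingular h2K (algMap_ne_zero hfm0)
    simp only [← map_pow, ← map_mul, ← map_add]
    congr 1
    linear_combination (cubic a b ^ 3) * hfp
  have hPrep : HasRep a b (.some _ _ hP) (X ^ p) 1 := by
    refine ⟨isCoprime_one_right, 1, one_ne_zero, ?_, ?_⟩
    · rw [Affine.Point.xRep_some]; simp
    · rw [Affine.Point.xRep_some]; simp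
  obtain ⟨xs, zs, hS⟩ := exists_rep a b (.some _ _ hP - .some _ _ hQ)
  have hseq := sequence hp2 hd hQ hPrep (by
    rw [degree_one, degree_X_pow]; exact_mod_cast (by omega : 0 < p)) hS
  refine ⟨xs.natDegree, ?_, by simpa using hseq⟩
  -- the representation of `P - Q`
  have hX0 : (X ^ p - X : (ZMod p)[X]) ≠ 0 := FiniteField.X_pow_card_sub_X_ne_zero _ hp1
  have hφX := algMap_ne_zero hX0
  have hφf := algMap_ne_zero hf0
  have key : numer a b m * zs = xs * (X ^ p - X) ^ 2 := by
    obtain ⟨hc, l, hl, h0, h1⟩ := hS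
    have hne : algebraMap (ZMod p)[X] (RatFunc (ZMod p)) (cubic a b * X ^ p) ≠
        algebraMap (ZMod p)[X] (RatFunc (ZMod p)) (cubic a b * X) := by
      intro h
      have := RatFunc.algebraMap_injective _ h
      exact hX0 (sub_eq_zero.2 (mul_left_cancel₀ hf0 this))
    rw [sub_eq_add_neg, Affine.Point.neg_some, Affine.Point.add_of_X_ne hne, Affine.Point.xRep_some,
      Affine.slope_of_X_ne hne] at h0 h1
    simp [Affine.addX, Affine.negY, twist, shortW] at h0 h1
    apply RatFunc.algebraMap_injective
    rw [numer]
    simp only [map_mul, map_pow, map_sub, map_add, map_one] at hφX ⊢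
    rw [h1]
    apply mul_left_cancel₀ hφf
    rw [← mul_assoc _ (algebraMap (ZMod p)[X] (RatFunc (ZMod p)) xs), h0]
    have : algebraMap (ZMod p)[X] (RatFunc (ZMod p)) (cubic a b) *
        algebraMap (ZMod p)[X] (RatFunc (ZMod p)) X ^ p -
        algebraMap (ZMod p)[X] (RatFunc (ZMod p)) (cubic a b) *
        algebraMap (ZMod p)[X] (RatFunc (ZMod p)) X =
        algebraMap (ZMod p)[X] (RatFunc (ZMod p)) (cubic a b) *
         (algebraMap (ZMod p)[X] (RatFunc (ZMod p)) X ^ p -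
          algebraMap (ZMod p)[X] (RatFunc (ZMod p)) X) := by ring
    simp only [RatFunc.algebraMap_X] at *
    rw [this]
    field_simp
    ring
  have hc := hS.1
  obtain ⟨G, hG⟩ : xs ∣ numer a b m := hc.dvd_of_dvd_mul_right ⟨_, key⟩
  have hdeg := numer_natDegree a b m hm hm1
  have hn0 : numer a b m ≠ 0 := by
    intro h; rw [h] at hdeg; simp at hdeg
  have hx0 : xs ≠ 0 := by rintro rfl; simp at hG; exact hn0 hG
  have hG0 : G ≠ 0 := by rintro rfl; simp at hG; exact hn0 hG
  have hGD : (X ^ p - X) ^ 2 = G * zs := by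
    apply mul_left_cancel₀ hx0
    rw [← key, hG]; ring
  have hb := gcd_bound a b m hm hm1 hd G ⟨xs, by rw [hG]; ring⟩ ⟨zs, hGD⟩
  rw [hG, natDegree_mul hx0 hG0] at hdeg
  omega

lemma hasse_short (a b : ZMod p) (hp : 3 ≤ p)
    (hd : 4 * a ^ 3 + 27 * b ^ 2 ≠ 0) :
    ((1 + ∑ c : ZMod p,
        (Finset.univ.filter fun y : ZMod p => y ^ 2 = c ^ 3 + a * c + b).card : ℕ) : ℝ) ≤
      p + 1 + 2 * Real.sqrt p := by
  have hodd : p % 2 = 1 := (Fact.out : p.Prime).eq_two_or_odd.resolve_left (by omega)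
  obtain ⟨d, hle, hq⟩ := exists_height a b (p / 2) (by omega) (by omega) hd
  have hle' : ((1 + ∑ c : ZMod p,
        (Finset.univ.filter fun y : ZMod p => y ^ 2 = c ^ 3 + a * c + b).card : ℕ) : ℝ) ≤ d := by
    exact_mod_cast hle
  refine hle'.trans ?_
  by_cases hs : 0 ≤ (d : ℤ) - p - 1
  · have h := quad_bound p d (by omega) hq hs
    have h' : ((d : ℝ) - p - 1) ^ 2 ≤ 4 * p := by exact_mod_cast h
    have h3 : (d : ℝ) - p - 1 ≤ Real.sqrt (4 * p) := Real.le_sqrt_of_sq_le h'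
    have h4 : Real.sqrt (4 * p) = 2 * Real.sqrt p := by
      rw [Real.sqrt_mul (by norm_num), show (4 : ℝ) = 2 ^ 2 by norm_num, Real.sqrt_sq (by norm_num)]
    rw [h4] at h3
    linarith
  · have : (d : ℤ) ≤ p + 1 := by omega
    have h' : (d : ℝ) ≤ p + 1 := by exact_mod_cast this
    have := Real.sqrt_nonneg (p : ℝ)
    linarith

lemma card_le (W : Affine (ZMod p)) [Fintype W.Point] :
    Fintype.card W.Point ≤ 1 + ∑ x : ZMod p, (Finset.univ.filter fun y : ZMod p =>
      y ^ 2 + W.a₁ * x * y + W.a₃ * y = x ^ 3 + W.a₂ * x ^ 2 + W.a₄ * x + W.a₆).card := by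
  classical
  rw [← Finset.card_sigma, add_comm, ← Fintype.card_coe, ← Fintype.card_option]
  refine Fintype.card_le_of_injective (fun P => match P with
    | .zero => none
    | .some x y h => some ⟨⟨x, y⟩, by
        have := (Affine.equation_iff _ _).1 h.1
        simpa using this⟩) ?_
  rintro (_ | ⟨x, y, h⟩) (_ | ⟨x', y', h'⟩) hh
  · rfl
  · simp at hh
  · simp at hh
  · simp at hh
    obtain ⟨rfl, rfl⟩ := hh
    rfl

lemma hasse (hp : 5 ≤ p) (W : Affine (ZMod p)) [W.IsElliptic] [Fintype W.Point] :
    (Fintype.card W.Point : ℝ) ≤ p + 1 + 2 * Real.sqrt p := by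
  have hnz : ∀ k : ℕ, 0 < k → k < 5 → (k : ZMod p) ≠ 0 := by
    intro k h0 h5 h
    rw [ZMod.natCast_eq_zero_iff] at h
    have := Nat.le_of_dvd h0 h
    omega
  have h2 : (2 : ZMod p) ≠ 0 := by exact_mod_cast hnz 2 (by norm_num) (by norm_num)
  have h3 : (3 : ZMod p) ≠ 0 := by exact_mod_cast hnz 3 (by norm_num) (by norm_num)
  have h12 : (12 : ZMod p) ≠ 0 := by
    rw [show (12 : ZMod p) = 2 * 2 * 3 by norm_num]
    exact mul_ne_zero (mul_ne_zero h2 h2) h3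
  have h48 : (48 : ZMod p) ≠ 0 := by
    rw [show (48 : ZMod p) = 12 * 2 * 2 by norm_num]
    exact mul_ne_zero (mul_ne_zero h12 h2) h2
  have h864 : (864 : ZMod p) ≠ 0 := by
    rw [show (864 : ZMod p) = 12 * 12 * 2 * 3 by norm_num]
    exact mul_ne_zero (mul_ne_zero (mul_ne_zero h12 h12) h2) h3
  set a := -W.c₄ / 48 with ha
  set b := -W.c₆ / 864 with hb
  have ha' : 48 * a = -W.c₄ := by rw [ha]; field_simp
  have hb' : 864 * b = -W.c₆ := by rw [hb]; field_simp
  have hd : 4 * a ^ 3 + 27 * b ^ 2 ≠ 0 := by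
    intro h
    have hΔ : W.Δ ≠ 0 := W.isUnit_Δ.ne_zero
    apply hΔ
    have hr := W.c_relation
    have h1728 : (1728 : ZMod p) ≠ 0 := by
      rw [show (1728 : ZMod p) = 12 * 12 * 12 by norm_num]
      exact mul_ne_zero (mul_ne_zero h12 h12) h12
    have : 1728 * W.Δ = 0 := by
      rw [hr, show W.c₄ = -(48 * a) by rw [ha']; ring, show W.c₆ = -(864 * b) by rw [hb']; ring]
      linear_combination (-27648) * h
    exact (mul_eq_zero.1 this).resolve_left h1728
  refine le_trans ?_ (hasse_short a b (by omega) hd)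
  have := card_le W
  refine le_trans (by exact_mod_cast this) (Nat.cast_le.2 (Nat.add_le_add_left (le_of_eq ?_) 1))
  refine Fintype.sum_equiv (Equiv.addRight (W.b₂ / 12)) _ _ fun x => ?_
  refine Finset.card_equiv (Equiv.addRight ((W.a₁ * x + W.a₃) / 2)) fun y => ?_
  rw [Finset.mem_filter, Finset.mem_filter]
  simp only [Finset.mem_univ, true_and, Equiv.coe_addRight]
  have e : (y + (W.a₁ * x + W.a₃) / 2) ^ 2 - ((x + W.b₂ / 12) ^ 3 + a * (x + W.b₂ / 12) + b)
      = y ^ 2 + W.a₁ * x * y + W.a₃ * y - (x ^ 3 + W.a₂ * x ^ 2 + W.a₄ * x + W.a₆) := by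
    rw [ha, hb, WeierstrassCurve.c₄, WeierstrassCurve.c₆, WeierstrassCurve.b₂, WeierstrassCurve.b₄,
      WeierstrassCurve.b₆]
    have k12 : (12 : ZMod p)⁻¹ = 2⁻¹ * 2⁻¹ * 3⁻¹ := by
      rw [← mul_inv, ← mul_inv]; norm_num
    field_simp
    ring
  rw [← sub_eq_zero, ← e, sub_eq_zero]

end Hasse

end Manin

/-- Let `N` be prime and `E` an elliptic curve over `F_p` with a point `P` of exact order
`N`, where `p + 1 + 2√p < 2N`. Then `#E(F_p) = N`, and `p` is prime. -/
theorem card_eq_prime_of_point_of_order (p N : ℕ) [Fact p.Prime] (hN : N.Prime)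
    (W : Affine (ZMod p)) [W.IsElliptic] [Fintype W.Point]
    (hlt : (p : ℝ) + 1 + 2 * Real.sqrt p < 2 * (N : ℝ))
    (P : W.Point) (hP : addOrderOf P = N) :
    Fintype.card W.Point = N ∧ p.Prime := by
  have hprime : p.Prime := Fact.out
  refine ⟨?_, hprime⟩
  have hlt2 : Fintype.card W.Point < 2 * N := by
    by_cases h5 : 5 ≤ p
    · have := (Manin.hasse h5 W).trans_lt hlt
      exact_mod_cast this
    · have hc := Manin.card_le W
      have hp2 := hprime.two_le
      have h4 : p ≠ 4 := by rintro rfl; revert hprime; decide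
      have h23 : p = 2 ∨ p = 3 := by omega
      have hfib : ∀ B D : ZMod p, (Finset.univ.filter fun y : ZMod p => y ^ 2 + B * y = D).card ≤ 2 := by
        intro B D
        by_cases hex : ∃ y₀ : ZMod p, y₀ ^ 2 + B * y₀ = D
        · obtain ⟨y₀, hy₀⟩ := hex
          refine (Finset.card_le_card (t := {y₀, -B - y₀}) fun y hy => ?_).trans
            Finset.card_le_two
          have hy' := (Finset.mem_filter.1 hy).2
          have hm : (y - y₀) * (y - (-B - y₀)) = 0 := by
            linear_combination hy' - hy₀
          rcases mul_eq_zero.1 hm with h | h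
          · simp [sub_eq_zero.1 h]
          · simp [sub_eq_zero.1 h]
        · rw [Finset.filter_false_of_mem fun y _ h => hex ⟨y, h⟩]
          simp
      have hc2 : Fintype.card W.Point ≤ 1 + p * 2 := by
        refine hc.trans (Nat.add_le_add_left ?_ 1)
        refine (Finset.sum_le_card_nsmul _ _ 2 fun x _ => ?_).trans ?_
        · have := hfib (W.a₁ * x + W.a₃) (x ^ 3 + W.a₂ * x ^ 2 + W.a₄ * x + W.a₆)
          simpa only [add_mul, ← add_assoc] using this
        · simp [ZMod.card]
      rcases h23 with h | h
      · have h1 : (1.4 : ℝ) ≤ Real.sqrt p := by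
          apply Real.le_sqrt_of_sq_le; rw [h]; norm_num
        have h2 : (5 : ℝ) < 2 * N := by
          have : (p : ℝ) = 2 := by exact_mod_cast h
          linarith
        have h3 : 5 < 2 * N := by exact_mod_cast h2
        omega
      · have h1 : (1.7 : ℝ) ≤ Real.sqrt p := by
          apply Real.le_sqrt_of_sq_le; rw [h]; norm_num
        have h2 : (7 : ℝ) < 2 * N := by
          have : (p : ℝ) = 3 := by exact_mod_cast h
          linarith
        have h3 : 7 < 2 * N := by exact_mod_cast h2
        omega
  have hdvd : N ∣ Fintype.card W.Point := by
    rw [← hP]; exact addOrderOf_dvd_card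
  obtain ⟨k, hk⟩ := hdvd
  have hpos : 0 < Fintype.card W.Point := Fintype.card_pos
  have hk1 : k < 2 := by
    rw [hk, mul_comm] at hlt2
    exact lt_of_mul_lt_mul_right hlt2 (Nat.zero_le _)
  have hk0 : k ≠ 0 := by rintro rfl; omega
  have : k = 1 := by omega
  rw [hk, this, mul_one]
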